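/- Let X be a nonempty finite type, let D_0, D_1 be distributions on X, let ε ∈ (0,1), γ ∈ (0, ε/2) and k ≥ 1. Set D_X := (1−ε)·D_0 + ε·D_1, let g be the associated tilted posterior function, and suppose h : X → [0,1] is γ-calibrated for g under D_X. Set p := E_{D_X}[h] (so p > 0) and D̃_1(z) := h(z)·D_X(z)/p, and define h' : X^k → {0,1} by h'(z_1,…,z_k) = 1 if ∏_{i=1}^k h(z_i) > ε^k and h' = 0 otherwise. Then |E_{D_1^⊗k}[h'] − E_{D_0^⊗k}[h']| ≥ d_TV(D_0^⊗k, D̃_1^⊗k) − (2γ/ε² + γ/ε + 2ε)·k. -/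

import Mathlib

/-- Expectation of `f` under the (finitely supported) distribution `D`. -/
noncomputable def expect {X : Type*} [Fintype X] (D f : X → ℝ) : ℝ := ∑ x, D x * f x

/-- `D` is a probability distribution on the finite type `X`. -/
def IsDist {X : Type*} [Fintype X] (D : X → ℝ) : Prop := (∀ x, 0 ≤ D x) ∧ ∑ x, D x = 1

/-- Total variation distance between two distributions on a finite type. -/
noncomputable def dTV {X : Type*} [Fintype X] (P Q : X → ℝ) : ℝ := (∑ x, |P x - Q x|) / 2

/-- `k`-fold product distribution on `Fin k → X`. -/
noncomputable def prodDist {X : Type*} (k : ℕ) (P : X → ℝ) : (Fin k → X) → ℝ :=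
  fun z => ∏ i, P (z i)

/-!
Write `D = (1 - ε) D₀ + ε D₁`. Reweighting `D` by the tilted posterior `g` gives back `D₁`, and
reweighting it by `h` gives `D̃₁`; calibration makes these two hard to tell apart
for tests that see a point `x` only through `h x`, and a hybrid argument carries this over to `k`
samples. On `k` samples `h'` is a likelihood ratio test between `D^⊗k` and `D̃₁^⊗k` with threshold
`(ε / p) ^ k`. As `|ε - p| ≤ γ`, this threshold is close to the optimal one `1`, so by the
Neyman–Pearson lemma `h'` nearly attains the total variation distance. Replacing `D` by `D₀` costs
`ε` per sample, once in the distance and once in the advantage of `h'`.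
-/

/-- A randomized test: `w t` is the probability of accepting the observation `t`. -/
def IsTest {Y : Type*} (w : Y → ℝ) : Prop := ∀ t, w t ∈ Set.Icc (0 : ℝ) 1

/-- `δ`-indistinguishability of `P` and `Q` through the statistic `u`: no test that sees `x` only
through `u x` has advantage more than `δ`. -/
def Indist {X Y : Type*} [Fintype X] (u : X → Y) (P Q : X → ℝ) (δ : ℝ) : Prop :=
  ∀ w : Y → ℝ, IsTest w → |expect P (fun x => w (u x)) - expect Q (fun x => w (u x))| ≤ δ

/-- `A` is a likelihood ratio test of `Q` against `T` with threshold `c`. It is unconstrained on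
ties, and the ratio is written without division so that `Q` may vanish. -/
def IsLikelihoodRatioTest {X : Type*} (c : ℝ) (Q T A : X → ℝ) : Prop :=
  (∀ x, c * Q x < T x → A x = 1) ∧ ∀ x, T x < c * Q x → A x = 0

/-- The mixture `(1 - ε) D₀ + ε D₁`, written `D_X` in the paper. -/
def mixture {X : Type*} (ε : ℝ) (D₀ D₁ : X → ℝ) : X → ℝ :=
  fun x => (1 - ε) * D₀ x + ε * D₁ x

/-- The tilted posterior: the probability that a sample `x` of the mixture was drawn from `D₁`,
set to `0` off the support of the mixture. -/
noncomputable def tiltedPosterior {X : Type*} (ε : ℝ) (D₀ D₁ : X → ℝ) : X → ℝ :=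
  fun x => if 0 < mixture ε D₀ D₁ x then ε * D₁ x / mixture ε D₀ D₁ x else 0

/-- The distribution `D` reweighted by `h` and normalized; `D̃₁` of the paper is
`reweight h D_X`. It is identically `0` when `h` has expectation `0`. -/
noncomputable def reweight {X : Type*} [Fintype X] (h D : X → ℝ) : X → ℝ :=
  fun x => h x * D x / expect D h

/-- `h` is `γ`-calibrated for `g` under `D`. -/
def IsCalibrated {X : Type*} [Fintype X] (D g h : X → ℝ) (γ : ℝ) : Prop :=
  ∀ w : ℝ → ℝ, IsTest w → |expect D (fun x => w (h x) * (g x - h x))| ≤ γ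

/-- The test on `k` samples that compares the product of the values of `h` with `e ^ k`; for
`e = ε` it is `h'` of the paper. -/
noncomputable def productTest {X : Type*} (h : X → ℝ) (e : ℝ) (k : ℕ) : (Fin k → X) → ℝ :=
  fun z => if ∏ i, h (z i) > e ^ k then 1 else 0

lemma isTest_ite {Y : Type*} (s : Y → Prop) [DecidablePred s] :
    IsTest fun t => if s t then (1 : ℝ) else 0 := by
  intro t
  dsimp only
  split_ifs <;> simp

lemma isTest_productTest {X : Type*} (h : X → ℝ) (e : ℝ) (k : ℕ) : IsTest (productTest h e k) :=
  isTest_ite _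

lemma one_sub_pow_le {x : ℝ} (hx : 0 ≤ x) (k : ℕ) : 1 - x ^ k ≤ k * (1 - x) := by
  have bernoulli := one_add_mul_le_pow (a := x - 1) (by linarith) k
  rw [add_sub_cancel] at bernoulli
  linarith

section Expectation

variable {X : Type*} [Fintype X]

lemma expect_sub (D f g : X → ℝ) :
    expect D (fun x => f x - g x) = expect D f - expect D g := by
  simp only [expect, mul_sub, Finset.sum_sub_distrib]

variable {D : X → ℝ}

lemma IsDist.expect_mem_Icc (hD : IsDist D) {f : X → ℝ} (hf : IsTest f) :
    expect D f ∈ Set.Icc (0 : ℝ) 1 := by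
  refine ⟨Finset.sum_nonneg fun x _ => mul_nonneg (hD.1 x) (hf x).1, ?_⟩
  rw [← hD.2]
  exact Finset.sum_le_sum fun x _ => mul_le_of_le_one_right (hD.1 x) (hf x).2

lemma IsDist.abs_expect_le (hD : IsDist D) {f : X → ℝ} {c : ℝ} (hf : ∀ x, |f x| ≤ c) :
    |expect D f| ≤ c :=
  calc |expect D f| ≤ ∑ x, |D x * f x| := Finset.abs_sum_le_sum_abs _ _
    _ ≤ ∑ x, D x * c := by
      refine Finset.sum_le_sum fun x _ => ?_
      rw [abs_mul, abs_of_nonneg (hD.1 x)]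
      exact mul_le_mul_of_nonneg_left (hf x) (hD.1 x)
    _ = c := by rw [← Finset.sum_mul, hD.2, one_mul]

end Expectation

section Product

variable {X Y : Type*} [Fintype X] {P Q : X → ℝ}

lemma isDist_prodDist (hP : IsDist P) (k : ℕ) : IsDist (prodDist k P) := by
  refine ⟨fun z => Finset.prod_nonneg fun i _ => hP.1 (z i), ?_⟩
  simp only [prodDist, ← Fintype.sum_pow, hP.2, one_pow]

lemma expect_prodDist_succ (k : ℕ) (P : X → ℝ) (F : (Fin (k + 1) → X) → ℝ) :
    expect (prodDist (k + 1) P) F =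
      expect P fun x => expect (prodDist k P) fun z => F (Fin.cons x z) := by
  simp only [expect, prodDist, Finset.mul_sum]
  rw [← (Fin.consEquiv fun _ : Fin (k + 1) => X).sum_comp, Fintype.sum_prod_type]
  refine Finset.sum_congr rfl fun x _ => Finset.sum_congr rfl fun z _ => ?_
  simp only [Fin.consEquiv, Equiv.coe_fn_mk, Fin.prod_univ_succ, Fin.cons_zero, Fin.cons_succ,
    mul_assoc]

lemma indist_prodDist (hP : IsDist P) (hQ : IsDist Q) {u : X → Y} {δ : ℝ}
    (hPQ : Indist u P Q δ) (k : ℕ) :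
    Indist (fun z : Fin k → X => u ∘ z) (prodDist k P) (prodDist k Q) (k * δ) := by
  induction k with
  | zero => intro φ _; simp [expect, prodDist]
  | succ k ih =>
    intro φ hφ
    simp only [expect_prodDist_succ, Fin.comp_cons]
    -- Replace `P` by `Q` in the last `k` coordinates, turning `A` into `B`, then in the first.
    let A : Y → ℝ := fun t => expect (prodDist k P) fun z => φ (Fin.cons t (u ∘ z))
    let B : Y → ℝ := fun t => expect (prodDist k Q) fun z => φ (Fin.cons t (u ∘ z))
    have hAB : ∀ t, |A t - B t| ≤ k * δ := fun t => ih (fun s => φ (Fin.cons t s)) fun _ => hφ _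
    have hB : IsTest B := fun t => (isDist_prodDist hQ k).expect_mem_Icc fun _ => hφ _
    calc |expect P (fun x => A (u x)) - expect Q (fun x => B (u x))|
        ≤ |expect P (fun x => A (u x)) - expect P (fun x => B (u x))|
          + |expect P (fun x => B (u x)) - expect Q (fun x => B (u x))| := abs_sub_le _ _ _
      _ ≤ k * δ + δ := by
        rw [← expect_sub]
        exact add_le_add (hP.abs_expect_le fun x => hAB (u x)) (hPQ B hB)
      _ = (k + 1 : ℕ) * δ := by push_cast; ring

lemma abs_expect_productTest_sub_le (hP : IsDist P) (hQ : IsDist Q) {h : X → ℝ} {δ : ℝ}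
    (hPQ : Indist h P Q δ) (e : ℝ) (k : ℕ) :
    |expect (prodDist k P) (productTest h e k) - expect (prodDist k Q) (productTest h e k)| ≤
      k * δ :=
  indist_prodDist hP hQ hPQ k (fun t => if ∏ i, t i > e ^ k then 1 else 0) (isTest_ite _)

end Product

section TotalVariation

variable {X : Type*} [Fintype X] {P Q T A F : X → ℝ} {c δ η : ℝ}

lemma dTV_triangle (P Q R : X → ℝ) : dTV P R ≤ dTV P Q + dTV Q R := by
  simp only [dTV, ← add_div, ← Finset.sum_add_distrib]
  gcongr
  exact abs_sub_le _ _ _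

lemma dTV_eq_expect_sub_expect (hP : IsDist P) (hQ : IsDist Q) :
    dTV P Q = expect Q (fun x => if P x ≤ Q x then 1 else 0)
      - expect P (fun x => if P x ≤ Q x then 1 else 0) := by
  have abs_eq : ∀ x, |P x - Q x| = 2 * (Q x * (if P x ≤ Q x then 1 else 0)
      - P x * (if P x ≤ Q x then 1 else 0)) - (Q x - P x) := by
    intro x
    split_ifs with hx
    · rw [abs_of_nonpos (by linarith)]; ring
    · rw [abs_of_nonneg (by linarith)]; ring
  simp only [dTV, expect, abs_eq, Finset.sum_sub_distrib, ← Finset.mul_sum, hP.2, hQ.2]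
  ring

lemma dTV_le_of_indist (hP : IsDist P) (hQ : IsDist Q) (hPQ : Indist id P Q δ) :
    dTV P Q ≤ δ := by
  rw [dTV_eq_expect_sub_expect hP hQ]
  have advantage_le := hPQ (fun x => if P x ≤ Q x then 1 else 0) (isTest_ite _)
  simp only [id] at advantage_le
  linarith [(abs_le.1 advantage_le).1]

lemma dTV_prodDist_le (hP : IsDist P) (hQ : IsDist Q) (hPQ : Indist id P Q δ) (k : ℕ) :
    dTV (prodDist k P) (prodDist k Q) ≤ k * δ :=
  dTV_le_of_indist (isDist_prodDist hP k) (isDist_prodDist hQ k) (indist_prodDist hP hQ hPQ k)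

lemma neyman_pearson (hA : IsLikelihoodRatioTest c Q T A) (hF : IsTest F) :
    expect T F - c * expect Q F ≤ expect T A - c * expect Q A := by
  simp only [expect, Finset.mul_sum, ← Finset.sum_sub_distrib]
  refine Finset.sum_le_sum fun x _ => ?_
  suffices 0 ≤ (T x - c * Q x) * (A x - F x) by linarith
  rcases lt_trichotomy (T x) (c * Q x) with hlt | heq | hgt
  · rw [hA.2 x hlt]
    exact mul_nonneg_of_nonpos_of_nonpos (by linarith) (by linarith [(hF x).1])
  · rw [heq, sub_self, zero_mul]
  · rw [hA.1 x hgt]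
    exact mul_nonneg (by linarith) (by linarith [(hF x).2])

lemma IsLikelihoodRatioTest.dTV_le (hA : IsLikelihoodRatioTest c Q T A) (hAt : IsTest A)
    (hQ : IsDist Q) (hT : IsDist T) (hc : 0 < c) (hη : 1 - c ≤ η) (hη' : 1 - c⁻¹ ≤ η) :
    dTV Q T ≤ expect T A - expect Q A + η := by
  rw [dTV_eq_expect_sub_expect hQ hT]
  set F : X → ℝ := fun x => if Q x ≤ T x then 1 else 0
  have hF : IsTest F := isTest_ite _
  have optimal := neyman_pearson hA hF
  have hQA := (hQ.expect_mem_Icc hAt).2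
  have hQF := (hQ.expect_mem_Icc hF).1
  have hTA := (hT.expect_mem_Icc hAt).1
  have hTF := (hT.expect_mem_Icc hF).2
  rcases le_total c 1 with hc1 | hc1
  · have error_le : (1 - c) * (expect Q A - expect Q F) ≤ 1 - c :=
      mul_le_of_le_one_right (by linarith) (by linarith)
    linarith
  · have error_le : (1 - c⁻¹) * (expect T F - expect T A) ≤ 1 - c⁻¹ :=
      mul_le_of_le_one_right (sub_nonneg.2 (inv_le_one_of_one_le₀ hc1)) (by linarith)
    have optimal' := mul_le_mul_of_nonneg_left optimal (inv_pos.2 hc).le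
    rw [mul_sub, mul_sub, inv_mul_cancel_left₀ hc.ne', inv_mul_cancel_left₀ hc.ne'] at optimal'
    linarith

end TotalVariation

section Mixture

variable {X : Type*} {D₀ D₁ : X → ℝ} {ε : ℝ}

lemma tiltedPosterior_mul_mixture {x : X} (hD₀ : 0 ≤ D₀ x) (hD₁ : 0 ≤ D₁ x) (hε₀ : 0 ≤ ε)
    (hε₁ : ε ≤ 1) : tiltedPosterior ε D₀ D₁ x * mixture ε D₀ D₁ x = ε * D₁ x := by
  unfold tiltedPosterior
  split_ifs with hpos
  · exact div_mul_cancel₀ _ hpos.ne'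
  · have h₀ := mul_nonneg (sub_nonneg.2 hε₁) hD₀
    have h₁ := mul_nonneg hε₀ hD₁
    unfold mixture at hpos
    linarith

variable [Fintype X]

lemma isDist_mixture (hD₀ : IsDist D₀) (hD₁ : IsDist D₁) (hε₀ : 0 ≤ ε) (hε₁ : ε ≤ 1) :
    IsDist (mixture ε D₀ D₁) := by
  refine ⟨fun x => add_nonneg (mul_nonneg (sub_nonneg.2 hε₁) (hD₀.1 x))
    (mul_nonneg hε₀ (hD₁.1 x)), ?_⟩
  simp only [mixture, Finset.sum_add_distrib, ← Finset.mul_sum, hD₀.2, hD₁.2]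
  ring

lemma indist_mixture {Y : Type*} (u : X → Y) (hD₀ : IsDist D₀) (hD₁ : IsDist D₁) (hε₀ : 0 ≤ ε) :
    Indist u D₀ (mixture ε D₀ D₁) ε := by
  intro w hw
  have hw₀ := hD₀.expect_mem_Icc fun x => hw (u x)
  have hw₁ := hD₁.expect_mem_Icc fun x => hw (u x)
  have sub_eq : expect D₀ (fun x => w (u x)) - expect (mixture ε D₀ D₁) (fun x => w (u x))
      = ε * (expect D₀ (fun x => w (u x)) - expect D₁ (fun x => w (u x))) := by
    simp only [expect, mixture, ← Finset.sum_sub_distrib, Finset.mul_sum]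
    exact Finset.sum_congr rfl fun x _ => by ring
  rw [sub_eq, abs_mul, abs_of_nonneg hε₀]
  refine mul_le_of_le_one_right hε₀ (abs_le.2 ⟨?_, ?_⟩) <;>
    linarith [hw₀.1, hw₀.2, hw₁.1, hw₁.2]

lemma expect_mixture_tiltedPosterior (hD₀ : IsDist D₀) (hD₁ : IsDist D₁) (hε₀ : 0 ≤ ε)
    (hε₁ : ε ≤ 1) : expect (mixture ε D₀ D₁) (tiltedPosterior ε D₀ D₁) = ε := by
  simp only [expect, mul_comm (mixture ε D₀ D₁ _),
    tiltedPosterior_mul_mixture (hD₀.1 _) (hD₁.1 _) hε₀ hε₁, ← Finset.mul_sum, hD₁.2, mul_one]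

lemma reweight_tiltedPosterior_mixture (hD₀ : IsDist D₀) (hD₁ : IsDist D₁) (hε₀ : 0 < ε)
    (hε₁ : ε ≤ 1) : reweight (tiltedPosterior ε D₀ D₁) (mixture ε D₀ D₁) = D₁ := by
  funext x
  rw [reweight, expect_mixture_tiltedPosterior hD₀ hD₁ hε₀.le hε₁,
    tiltedPosterior_mul_mixture (hD₀.1 x) (hD₁.1 x) hε₀.le hε₁, mul_div_cancel_left₀ _ hε₀.ne']

end Mixture

section Reweight

variable {X : Type*} [Fintype X] {D g h : X → ℝ} {γ e : ℝ}

lemma isDist_reweight (hD : ∀ x, 0 ≤ D x) (hh : ∀ x, 0 ≤ h x) (hp : 0 < expect D h) :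
    IsDist (reweight h D) := by
  refine ⟨fun x => div_nonneg (mul_nonneg (hh x) (hD x)) hp.le, ?_⟩
  simp only [reweight, ← Finset.sum_div, mul_comm (h _)]
  exact div_self hp.ne'

lemma expect_mul_expect_reweight (hp : expect D h ≠ 0) (f : X → ℝ) :
    expect D h * expect (reweight h D) f = expect D fun x => f x * h x := by
  change expect D h * ∑ x, reweight h D x * f x = ∑ x, D x * (f x * h x)
  rw [Finset.mul_sum]
  refine Finset.sum_congr rfl fun x _ => ?_
  unfold reweight
  field_simp

lemma prodDist_reweight (k : ℕ) (z : Fin k → X) :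
    prodDist k (reweight h D) z = (∏ i, h (z i)) / expect D h ^ k * prodDist k D z := by
  simp only [prodDist, reweight, Finset.prod_div_distrib, Finset.prod_mul_distrib,
    Finset.prod_const, Finset.card_univ, Fintype.card_fin]
  ring

lemma isLikelihoodRatioTest_productTest (hD : ∀ x, 0 ≤ D x) (hp : 0 < expect D h) (k : ℕ) :
    IsLikelihoodRatioTest ((e / expect D h) ^ k) (prodDist k D) (prodDist k (reweight h D))
      (productTest h e k) := by
  have hDk : ∀ z, 0 ≤ prodDist k D z := fun z => Finset.prod_nonneg fun i _ => hD (z i)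
  have hpk : 0 < expect D h ^ k := pow_pos hp k
  constructor <;> intro z hz <;> rw [prodDist_reweight, div_pow] at hz <;>
    have ratio_lt := (div_lt_div_iff_of_pos_right hpk).1 (lt_of_mul_lt_mul_right hz (hDk z))
  · exact if_pos ratio_lt
  · exact if_neg ratio_lt.le.not_gt

lemma IsCalibrated.abs_expect_sub_le (hcal : IsCalibrated D g h γ) :
    |expect D g - expect D h| ≤ γ := by
  simpa only [one_mul, expect_sub] using hcal (fun _ => 1) fun _ => by simp

lemma IsCalibrated.indist_reweight (hcal : IsCalibrated D g h γ) (hD : ∀ x, 0 ≤ D x)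
    (hh : ∀ x, 0 ≤ h x) (hg : 0 < expect D g) (hp : 0 < expect D h) :
    Indist h (reweight g D) (reweight h D) (2 * γ / expect D g) := by
  intro w hw
  have hT := (isDist_reweight hD hh hp).expect_mem_Icc fun x => hw (h x)
  have calibrated := hcal w hw
  simp only [mul_sub, expect_sub] at calibrated
  rw [← expect_mul_expect_reweight hg.ne', ← expect_mul_expect_reweight hp.ne'] at calibrated
  set S := expect (reweight g D) fun x => w (h x)
  set T := expect (reweight h D) fun x => w (h x)
  have normalization_error : |(expect D h - expect D g) * T| ≤ γ := by
    rw [abs_mul, abs_of_nonneg hT.1, abs_sub_comm]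
    exact (mul_le_of_le_one_right (abs_nonneg _) hT.2).trans hcal.abs_expect_sub_le
  rw [le_div_iff₀ hg]
  calc |S - T| * expect D g
      = |(S - T) * expect D g| := by rw [abs_mul, abs_of_pos hg]
    _ = |(expect D g * S - expect D h * T) + (expect D h - expect D g) * T| :=
      congrArg abs (by ring)
    _ ≤ γ + γ := (abs_add_le _ _).trans (add_le_add calibrated normalization_error)
    _ = 2 * γ := by ring

lemma dTV_prodDist_reweight_le (hD : IsDist D) (hh : ∀ x, 0 ≤ h x) (he : 0 < e)
    (hp : 0 < expect D h) (hγ : |e - expect D h| ≤ γ) (k : ℕ) :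
    dTV (prodDist k D) (prodDist k (reweight h D)) ≤
      expect (prodDist k (reweight h D)) (productTest h e k)
        - expect (prodDist k D) (productTest h e k) + k * (γ / e) := by
  have hγ₀ : 0 ≤ γ := (abs_nonneg _).trans hγ
  obtain ⟨hγ₁, hγ₂⟩ := abs_le.1 hγ
  set p := expect D h
  have ratio_le : 1 - e / p ≤ γ / e := by
    rcases le_total e p with hep | hpe
    · calc 1 - e / p = (p - e) / p := one_sub_div hp.ne'
        _ ≤ γ / e := by gcongr; linarith
    · exact (sub_nonpos.2 ((one_le_div hp).2 hpe)).trans (by positivity)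
  have inv_ratio_le : 1 - p / e ≤ γ / e := by
    rw [one_sub_div he.ne']
    gcongr
  refine (isLikelihoodRatioTest_productTest hD.1 hp k).dTV_le (isTest_productTest h e k)
    (isDist_prodDist hD k) (isDist_prodDist (isDist_reweight hD.1 hh hp) k) (by positivity) ?_ ?_
  · exact (one_sub_pow_le (by positivity) k).trans (by gcongr)
  · rw [← inv_pow, inv_div]
    exact (one_sub_pow_le (by positivity) k).trans (by gcongr)

end Reweight

theorem stmt_3_general {X : Type*} [Fintype X] {D₀ D₁ h : X → ℝ} {ε γ : ℝ}
    (hD₀ : IsDist D₀) (hD₁ : IsDist D₁) (hε₀ : 0 < ε) (hε₁ : ε ≤ 1) (hγ : γ < ε)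
    (hh : ∀ x, 0 ≤ h x)
    (hcal : IsCalibrated (mixture ε D₀ D₁) (tiltedPosterior ε D₀ D₁) h γ) (k : ℕ) :
    0 < expect (mixture ε D₀ D₁) h ∧
    dTV (prodDist k D₀) (prodDist k (reweight h (mixture ε D₀ D₁))) - (3 * γ / ε + 2 * ε) * k ≤
      |expect (prodDist k D₁) (productTest h ε k)
        - expect (prodDist k D₀) (productTest h ε k)| := by
  set D := mixture ε D₀ D₁
  have hD : IsDist D := isDist_mixture hD₀ hD₁ hε₀.le hε₁
  have hg : expect D (tiltedPosterior ε D₀ D₁) = ε :=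
    expect_mixture_tiltedPosterior hD₀ hD₁ hε₀.le hε₁
  have hpγ : |ε - expect D h| ≤ γ := hg ▸ hcal.abs_expect_sub_le
  have hp : 0 < expect D h := by linarith [(abs_le.1 hpγ).2]
  refine ⟨hp, ?_⟩
  have indist₁ : Indist h D₁ (reweight h D) (2 * γ / ε) := by
    have := hcal.indist_reweight hD.1 hh (hg.symm ▸ hε₀) hp
    rwa [hg, reweight_tiltedPosterior_mixture hD₀ hD₁ hε₀ hε₁] at this
  have test₁ := abs_expect_productTest_sub_le hD₁ (isDist_reweight hD.1 hh hp) indist₁ ε k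
  have test₀ := abs_expect_productTest_sub_le hD₀ hD (indist_mixture h hD₀ hD₁ hε₀.le) ε k
  have dist₀ := dTV_prodDist_le hD₀ hD (indist_mixture id hD₀ hD₁ hε₀.le) k
  have optimal := dTV_prodDist_reweight_le hD hh hε₀ hp hpγ k
  have triangle := dTV_triangle (prodDist k D₀) (prodDist k D) (prodDist k (reweight h D))
  have advantage := le_abs_self
    (expect (prodDist k D₁) (productTest h ε k) - expect (prodDist k D₀) (productTest h ε k))
  linear_combination (abs_le.1 test₁).1 + (abs_le.1 test₀).2 + dist₀ + optimal + triangle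
    + advantage

theorem stmt_3 {X : Type*} [Fintype X] [Nonempty X]
    (D0 D1 : X → ℝ) (hD0 : IsDist D0) (hD1 : IsDist D1)
    (ε γ : ℝ) (hε : ε ∈ Set.Ioo (0:ℝ) 1) (hγ : γ ∈ Set.Ioo (0:ℝ) (ε/2))
    (k : ℕ) (hk : 1 ≤ k)
    (DX : X → ℝ) (hDX : DX = fun x => (1 - ε) * D0 x + ε * D1 x)
    (g : X → ℝ)
    (hg : g = fun x => if 0 < DX x then ε * D1 x / DX x else 0)
    (h : X → ℝ) (hh : ∀ x, h x ∈ Set.Icc (0:ℝ) 1)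
    (hcal : ∀ w : ℝ → ℝ, (∀ t, w t ∈ Set.Icc (0:ℝ) 1) →
      |expect DX (fun x => w (h x) * (g x - h x))| ≤ γ)
    (p : ℝ) (hp : p = expect DX h)
    (Dt1 : X → ℝ) (hDt1 : Dt1 = fun z => h z * DX z / p)
    (h' : (Fin k → X) → ℝ)
    (hh' : h' = fun z => if (∏ i, h (z i)) > ε ^ k then 1 else 0) :
    0 < p ∧
    |expect (prodDist k D1) h' - expect (prodDist k D0) h'| ≥
      dTV (prodDist k D0) (prodDist k Dt1) - (2 * γ / ε ^ 2 + γ / ε + 2 * ε) * k := by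
  subst hDX hg hp hDt1 hh'
  obtain ⟨hp, hbound⟩ := stmt_3_general hD0 hD1 hε.1 hε.2.le (by linarith [hγ.1, hγ.2])
    (fun x => (hh x).1) hcal k
  have hγε : 2 * γ / ε ≤ 2 * γ / ε ^ 2 :=
    div_le_div_of_nonneg_left (by linarith [hγ.1]) (pow_pos hε.1 2)
      (pow_le_of_le_one hε.1.le hε.2.le two_ne_zero)
  refine ⟨hp, (sub_le_sub_left (mul_le_mul_of_nonneg_right ?_ k.cast_nonneg) _).trans hbound⟩
  linear_combination hγε
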